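/- arXiv:1910.08033 — 2 statements merged into one kernel-verified Lean document; each statement's English description precedes it below -/
import Mathlib

section
/- Let m ≥ n ≥ 1 and let A ∈ ℝ^{m×n} be in general position, meaning every set of n rows of A is linearly independent. Then for every i ∈ [m], lim_{p→0⁺} w_p(A)_i = n/m. -/
open Matrix Real BigOperators Pointwise

noncomputable def leverage {m n : ℕ} (B : Matrix (Fin m) (Fin n) ℝ) : Fin m → ℝ :=
  fun i => (B * (Bᵀ * B)⁻¹ * Bᵀ) i i

noncomputable def lewisRescaled {m n : ℕ} (A : Matrix (Fin m) (Fin n) ℝ) (p : ℝ)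
    (w : Fin m → ℝ) : Matrix (Fin m) (Fin n) ℝ :=
  Matrix.diagonal (fun i => w i ^ ((1:ℝ)/2 - 1/p)) * A

def IsLewisWeight {m n : ℕ} (A : Matrix (Fin m) (Fin n) ℝ) (p : ℝ) (w : Fin m → ℝ) : Prop :=
  (∀ i, 0 < w i) ∧ ∀ i, w i = leverage (lewisRescaled A p w) i

theorem cb_aux {m n : ℕ} (A : Matrix (Fin m) (Fin n) ℝ) (c : Fin m → ℝ) :
    (Aᵀ * diagonal c * A).det = ∑ f : Fin n → Fin m, (∏ r, c (f r)) * ((∏ r, A (f r) r) * (A.submatrix f id).det) := by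
  have h1 : (Aᵀ * diagonal c * A) = fun r => ∑ k, (c k * A k r) • A k := by
    ext r s
    rw [Matrix.mul_apply]
    simp [Matrix.mul_diagonal, mul_comm]
  have h2 : (Aᵀ * diagonal c * A).det = Matrix.detRowAlternating.toMultilinearMap (fun r => ∑ k, (c k * A k r) • A k) := by
    rw [h1]; rfl
  rw [h2, MultilinearMap.map_sum]
  refine Finset.sum_congr rfl fun f _ => ?_
  rw [MultilinearMap.map_smul_univ, Finset.prod_mul_distrib, smul_eq_mul, mul_assoc]
  rfl

theorem cb {m n : ℕ} (A : Matrix (Fin m) (Fin n) ℝ) (c : Fin m → ℝ) :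
    (Nat.factorial n : ℝ) * (Aᵀ * diagonal c * A).det
      = ∑ f : Fin n → Fin m, (∏ r, c (f r)) * (A.submatrix f id).det ^ 2 := by
  have key : ∀ τ : Equiv.Perm (Fin n), (Aᵀ * diagonal c * A).det =
      ∑ f : Fin n → Fin m, (∏ r, c (f r)) *
        ((Equiv.Perm.sign τ : ℝ) * (∏ r, A (f (τ r)) r) * (A.submatrix f id).det) := by
    intro τ
    rw [cb_aux]
    symm
    refine Fintype.sum_equiv (Equiv.arrowCongr τ.symm (Equiv.refl _)) _ _ fun f => ?_
    have e1 : (∏ r, c (f (τ r))) = ∏ r, c (f r) := Equiv.prod_comp τ (fun r => c (f r))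
    have e2 : (A.submatrix (fun r => f (τ r)) id).det = (Equiv.Perm.sign τ : ℝ) * (A.submatrix f id).det := by
      have := Matrix.det_permute τ (A.submatrix f id)
      rw [← this]; rfl
    have e3 : (Equiv.arrowCongr τ.symm (Equiv.refl _)) f = fun r => f (τ r) := by
      ext r; simp [Equiv.arrowCongr]
    rw [e3, e1, e2]; ring
  have : (Nat.factorial n : ℝ) * (Aᵀ * diagonal c * A).det
      = ∑ τ : Equiv.Perm (Fin n), (Aᵀ * diagonal c * A).det := by
    simp [Fintype.card_perm]
  rw [this, Finset.sum_congr rfl (fun τ _ => key τ), Finset.sum_comm]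
  refine Finset.sum_congr rfl fun f _ => ?_
  rw [← Finset.mul_sum, ← Finset.sum_mul, sq]
  congr 2
  rw [Matrix.det_apply']
  simp

theorem cb_compare {m n : ℕ} (A : Matrix (Fin m) (Fin n) ℝ) (c : Fin m → ℝ) (hc : ∀ k, 0 < c k) (K : ℝ)
    (hK : ∀ f g : Fin n → Fin m, Function.Injective f → Function.Injective g →
      (A.submatrix f id).det ^ 2 ≤ K * (A.submatrix g id).det ^ 2)
    (i j : Fin m) (hij : i ≠ j) (hcij : K * c j ≤ c i) :
    (Aᵀ * diagonal (Function.update c i 0) * A).det ≤ (Aᵀ * diagonal (Function.update c j 0) * A).det := by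
  have hn : (0:ℝ) < Nat.factorial n := by exact_mod_cast Nat.factorial_pos n
  refine le_of_mul_le_mul_left ?_ hn
  rw [cb, cb]
  rw [← Equiv.sum_comp (Equiv.arrowCongr (Equiv.refl (Fin n)) (Equiv.swap i j)) (fun f => (∏ r, Function.update c j 0 (f r)) * (A.submatrix f id).det ^ 2)]
  refine Finset.sum_le_sum fun f _ => ?_
  have e3 : (Equiv.arrowCongr (Equiv.refl (Fin n)) (Equiv.swap i j)) f = fun r => Equiv.swap i j (f r) := by
    ext r; simp [Equiv.arrowCongr]
  rw [e3]
  have nn : ∀ (k : Fin m) (g : Fin n → Fin m), 0 ≤ ∏ r, Function.update c k 0 (g r) := by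
    intro k g
    refine Finset.prod_nonneg fun r _ => ?_
    by_cases h : g r = k
    · simp [h]
    · simp [h, (hc _).le]
  by_cases hf : Function.Injective f
  swap
  · have : (A.submatrix f id).det = 0 := by
      simp only [Function.Injective, not_forall] at hf
      obtain ⟨a, b, hab, hne⟩ := hf
      exact Matrix.det_zero_of_row_eq hne (by ext s; simp [hab])
    rw [this]
    have := mul_nonneg (nn j fun r => Equiv.swap i j (f r)) (sq_nonneg (A.submatrix (fun r => Equiv.swap i j (f r)) id).det)
    simpa using this
  have hg : Function.Injective (fun r => Equiv.swap i j (f r)) := (Equiv.swap i j).injective.comp hf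
  by_cases hi : ∃ r, f r = i
  · obtain ⟨r, hr⟩ := hi
    rw [Finset.prod_eq_zero (Finset.mem_univ r) (by simp [hr]), zero_mul]
    exact mul_nonneg (nn _ _) (sq_nonneg _)
  push Not at hi
  by_cases hj : ∃ r, f r = j
  · obtain ⟨r0, hr0⟩ := hj
    have hD := hK f _ hf hg
    rw [← Finset.mul_prod_erase _ _ (Finset.mem_univ r0), ← Finset.mul_prod_erase _ (fun r => Function.update c j 0 (Equiv.swap i j (f r))) (Finset.mem_univ r0)]
    have e : ∏ r ∈ Finset.univ.erase r0, Function.update c j 0 (Equiv.swap i j (f r)) = ∏ r ∈ Finset.univ.erase r0, c (f r) := by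
      refine Finset.prod_congr rfl fun r hr => ?_
      have hrj : f r ≠ j := fun h => (Finset.ne_of_mem_erase hr) (hf (h.trans hr0.symm))
      rw [Equiv.swap_apply_of_ne_of_ne (hi r) hrj]; simp [hrj]
    have e' : ∏ r ∈ Finset.univ.erase r0, Function.update c i 0 (f r) = ∏ r ∈ Finset.univ.erase r0, c (f r) := by
      refine Finset.prod_congr rfl fun r hr => ?_
      simp [hi r]
    rw [e, e']
    have hP : 0 ≤ ∏ r ∈ Finset.univ.erase r0, c (f r) := Finset.prod_nonneg fun r _ => (hc _).le
    simp only [hr0, Equiv.swap_apply_right, Function.update_of_ne hij, Function.update_of_ne hij.symm]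
    set P := ∏ r ∈ Finset.univ.erase r0, c (f r)
    set D := (A.submatrix f id).det ^ 2
    set D' := (A.submatrix (fun r => Equiv.swap i j (f r)) id).det ^ 2
    have hD' : 0 ≤ D' := sq_nonneg _
    calc c j * P * D = P * (c j * D) := by ring
      _ ≤ P * (c i * D') := by
        refine mul_le_mul_of_nonneg_left ?_ hP
        nlinarith [mul_le_mul_of_nonneg_left hD (hc j).le, mul_le_mul_of_nonneg_right hcij hD']
      _ = _ := by ring
  · push Not at hj
    have : (fun r => Equiv.swap i j (f r)) = f := by
      ext r; rw [Equiv.swap_apply_of_ne_of_ne (hi r) (hj r)]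
    rw [this]
    apply le_of_eq
    congr 1
    refine Finset.prod_congr rfl fun r _ => ?_
    simp [hi r, hj r]

theorem gram_eq {m n : ℕ} (A : Matrix (Fin m) (Fin n) ℝ) (d : Fin m → ℝ) :
    (diagonal d * A)ᵀ * (diagonal d * A) = Aᵀ * diagonal (fun k => d k ^ 2) * A := by
  rw [Matrix.transpose_mul, Matrix.diagonal_transpose, Matrix.mul_assoc, ← Matrix.mul_assoc (diagonal d),
    Matrix.diagonal_mul_diagonal, Matrix.mul_assoc]
  simp [sq]

theorem det_lev {m n : ℕ} (A : Matrix (Fin m) (Fin n) ℝ) (d : Fin m → ℝ)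
    (hM : (Aᵀ * diagonal (fun k => d k ^ 2) * A).det ≠ 0) (i : Fin m) :
    (Aᵀ * diagonal (Function.update (fun k => d k ^ 2) i 0) * A).det =
      (Aᵀ * diagonal (fun k => d k ^ 2) * A).det * (1 - leverage (diagonal d * A) i) := by
  have h : Aᵀ * diagonal (Function.update (fun k => d k ^ 2) i 0) * A =
      Aᵀ * diagonal (fun k => d k ^ 2) * A + replicateCol Unit (-((diagonal d * A) i)) *
        replicateRow Unit ((diagonal d * A) i) := by
    ext r s
    rw [Matrix.add_apply, Matrix.mul_apply, Matrix.mul_apply]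
    simp only [Matrix.mul_diagonal, Matrix.transpose_apply]
    rw [← Finset.add_sum_erase _ _ (Finset.mem_univ i), ← Finset.add_sum_erase _ (fun x => A x r * d x ^ 2 * A x s) (Finset.mem_univ i)]
    have : ∑ x ∈ Finset.univ.erase i, A x r * Function.update (fun k => d k ^ 2) i 0 x * A x s
        = ∑ x ∈ Finset.univ.erase i, A x r * d x ^ 2 * A x s := by
      refine Finset.sum_congr rfl fun x hx => ?_
      rw [Function.update_of_ne (Finset.ne_of_mem_erase hx)]
    rw [this]
    simp [Matrix.diagonal_mul, Matrix.mul_apply (M := replicateCol Unit _)]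
    ring
  rw [h, Matrix.det_add_replicateCol_mul_replicateRow (isUnit_iff_ne_zero.mpr hM)]
  congr 1
  rw [Matrix.det_unique, leverage, gram_eq]
  set N := (Aᵀ * diagonal (fun k => d k ^ 2) * A)⁻¹
  set B := diagonal d * A
  simp only [Matrix.add_apply, Matrix.one_apply_eq, Matrix.mul_apply, Matrix.replicateRow_apply, Matrix.replicateCol_apply, Matrix.transpose_apply, Pi.neg_apply, mul_neg, Finset.sum_neg_distrib]
  ring

theorem sum_lev {m n : ℕ} (A : Matrix (Fin m) (Fin n) ℝ) (d : Fin m → ℝ)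
    (hM : (Aᵀ * diagonal (fun k => d k ^ 2) * A).det ≠ 0) :
    ∑ i, leverage (diagonal d * A) i = n := by
  have : ∑ i, leverage (diagonal d * A) i = Matrix.trace ((diagonal d * A) * ((diagonal d * A)ᵀ * (diagonal d * A))⁻¹ * (diagonal d * A)ᵀ) := rfl
  rw [this, Matrix.trace_mul_comm, ← Matrix.mul_assoc, Matrix.mul_nonsing_inv]
  · simp
  · rw [gram_eq]; exact isUnit_iff_ne_zero.mpr hM

theorem det_sub_ne {m n : ℕ} (A : Matrix (Fin m) (Fin n) ℝ)
    (hgen : ∀ s : Finset (Fin m), s.card = n →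
      LinearIndependent ℝ (fun i : {x // x ∈ s} => A i.1))
    (f : Fin n → Fin m) (hf : Function.Injective f) : (A.submatrix f id).det ≠ 0 := by
  have h := hgen (Finset.univ.image f) (by rw [Finset.card_image_of_injective _ hf]; simp)
  have h2 : LinearIndependent ℝ (A.submatrix f id).row :=
    h.comp (fun r => ⟨f r, by simp⟩) (fun a b hab => hf (by simpa using hab))
  rw [Matrix.linearIndependent_rows_iff_isUnit, Matrix.isUnit_iff_isUnit_det] at h2
  exact h2.ne_zero

theorem exists_K {m n : ℕ} (A : Matrix (Fin m) (Fin n) ℝ)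
    (hA : ∀ f : Fin n → Fin m, Function.Injective f → (A.submatrix f id).det ≠ 0) :
    ∃ K : ℝ, 1 ≤ K ∧ ∀ f g : Fin n → Fin m, Function.Injective f → Function.Injective g →
      (A.submatrix f id).det ^ 2 ≤ K * (A.submatrix g id).det ^ 2 := by
  obtain ⟨K, hK⟩ := (Set.finite_range (fun q : (Fin n → Fin m) × (Fin n → Fin m) =>
    (A.submatrix q.1 id).det ^ 2 / (A.submatrix q.2 id).det ^ 2)).bddAbove
  refine ⟨max K 1, le_max_right _ _, fun f g _ hg => ?_⟩
  have h0 : 0 < (A.submatrix g id).det ^ 2 := by have := hA g hg; positivity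
  rw [← div_le_iff₀ h0]
  exact (hK ⟨(f, g), rfl⟩).trans (le_max_left _ _)

theorem det_gram_pos {m n : ℕ} (hmn : n ≤ m) (A : Matrix (Fin m) (Fin n) ℝ)
    (hA : ∀ f : Fin n → Fin m, Function.Injective f → (A.submatrix f id).det ≠ 0)
    (c : Fin m → ℝ) (hc : ∀ k, 0 < c k) : 0 < (Aᵀ * diagonal c * A).det := by
  have hn : (0:ℝ) < Nat.factorial n := by exact_mod_cast Nat.factorial_pos n
  refine pos_of_mul_pos_right ?_ hn.le
  rw [cb]
  refine Finset.sum_pos' (fun f _ => mul_nonneg (Finset.prod_nonneg fun r _ => (hc _).le) (sq_nonneg _))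
    ⟨Fin.castLE hmn, Finset.mem_univ _, ?_⟩
  have := hA _ (Fin.castLE_injective hmn)
  exact mul_pos (Finset.prod_pos fun r _ => hc _) (by positivity)

theorem lewis_ratio {m n : ℕ} (hmn : n ≤ m) (A : Matrix (Fin m) (Fin n) ℝ)
    (hA : ∀ f : Fin n → Fin m, Function.Injective f → (A.submatrix f id).det ≠ 0)
    (K : ℝ) (hK1 : 1 ≤ K)
    (hK : ∀ f g : Fin n → Fin m, Function.Injective f → Function.Injective g →
      (A.submatrix f id).det ^ 2 ≤ K * (A.submatrix g id).det ^ 2)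
    (p : ℝ) (hp : 0 < p) (hp2 : p < 2) (w : Fin m → ℝ) (hw : IsLewisWeight A p w) :
    (∑ i, w i = n) ∧ ∀ i j, w j ≤ K ^ (p / (2 - p)) * w i := by
  obtain ⟨hpos, hlev⟩ := hw
  set d : Fin m → ℝ := fun i => w i ^ ((1:ℝ)/2 - 1/p) with hd
  have hdpos : ∀ i, 0 < d i := fun i => Real.rpow_pos_of_pos (hpos i) _
  have hM := det_gram_pos hmn A hA (fun k => d k ^ 2) (fun k => pow_pos (hdpos k) 2)
  have hlev' : ∀ i, w i = leverage (diagonal d * A) i := hlev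
  refine ⟨?_, ?_⟩
  · rw [← sum_lev A d hM.ne']
    exact Finset.sum_congr rfl fun i _ => hlev' i
  intro i j
  have hs : 0 < p / (2 - p) := div_pos hp (by linarith)
  have hKs : 1 ≤ K ^ (p / (2 - p)) := Real.one_le_rpow hK1 hs.le
  by_contra! hlt
  have hwij : w i < w j := by nlinarith [hpos i]
  have hij : i ≠ j := by rintro rfl; exact lt_irrefl _ hwij
  have hcij : K * d j ^ 2 ≤ d i ^ 2 := by
    have hdd : ∀ k, d k ^ 2 = (w k ^ (2/p - 1))⁻¹ := by
      intro k
      rw [← Real.rpow_neg (hpos k).le, ← Real.rpow_natCast, hd]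
      simp only
      rw [← Real.rpow_mul (hpos k).le]
      congr 1
      push_cast
      ring
    have hs' : 0 < 2 / p - 1 := by
      rw [sub_pos, lt_div_iff₀ hp]; linarith
    have := Real.rpow_le_rpow (by have := hpos i; positivity) hlt.le hs'.le
    rw [Real.mul_rpow (by positivity) (hpos i).le, ← Real.rpow_mul (by linarith)] at this
    have h1 : p / (2 - p) * (2 / p - 1) = 1 := by
      have : (2 - p) ≠ 0 := by linarith
      field_simp
    rw [h1, Real.rpow_one] at this
    rw [hdd, hdd, ← div_eq_mul_inv, div_le_iff₀ (Real.rpow_pos_of_pos (hpos j) _), inv_mul_eq_div,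
      le_div_iff₀ (Real.rpow_pos_of_pos (hpos i) _)]
    exact this
  have := cb_compare A (fun k => d k ^ 2) (fun k => pow_pos (hdpos k) 2) K hK i j hij hcij
  rw [det_lev A d hM.ne', det_lev A d hM.ne', ← hlev', ← hlev'] at this
  have := le_of_mul_le_mul_left this hM
  linarith

/-- as `p → 0⁺`, the Lewis weights of a matrix in general position
converge to the uniform vector `n/m`. -/
theorem lewis_weight_limit_zero {m n : ℕ} (hn : 1 ≤ n) (hmn : n ≤ m)
    (A : Matrix (Fin m) (Fin n) ℝ)
    (hgen : ∀ s : Finset (Fin m), s.card = n →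
      LinearIndependent ℝ (fun i : {x // x ∈ s} => A i.1))
    (w : ℝ → Fin m → ℝ) (hw : ∀ p : ℝ, 0 < p → IsLewisWeight A p (w p)) :
    ∀ i : Fin m, Filter.Tendsto (fun p => w p i)
      (nhdsWithin 0 (Set.Ioi 0)) (nhds ((n : ℝ) / (m : ℝ))) := by
  intro i
  have hA := det_sub_ne A hgen
  obtain ⟨K, hK1, hK⟩ := exists_K A hA
  have hm : (0:ℝ) < m := by exact_mod_cast (by omega : 0 < m)
  have hK0 : 0 < K := by linarith
  have hlim : Filter.Tendsto (fun p : ℝ => K ^ (p / (2 - p))) (nhdsWithin 0 (Set.Ioi 0)) (nhds 1) := by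
    have hc : ContinuousAt (fun p : ℝ => K ^ (p / (2 - p))) 0 := by
      refine ContinuousAt.rpow continuousAt_const ?_ (Or.inl hK0.ne')
      exact ContinuousAt.div continuousAt_id (by fun_prop) (by norm_num)
    have := hc.tendsto
    simp only [zero_div, Real.rpow_zero] at this
    exact this.mono_left nhdsWithin_le_nhds
  have hlow : Filter.Tendsto (fun p : ℝ => (n:ℝ) / m / K ^ (p / (2 - p))) (nhdsWithin 0 (Set.Ioi 0)) (nhds ((n:ℝ)/m)) := by
    have := (tendsto_const_nhds (x := (n:ℝ)/m)).div hlim one_ne_zero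
    rw [div_one] at this
    exact this
  have hup : Filter.Tendsto (fun p : ℝ => (n:ℝ) / m * K ^ (p / (2 - p))) (nhdsWithin 0 (Set.Ioi 0)) (nhds ((n:ℝ)/m)) := by
    simpa using (tendsto_const_nhds (x := (n:ℝ)/m)).mul hlim
  have hev : ∀ᶠ p : ℝ in nhdsWithin 0 (Set.Ioi 0), p ∈ Set.Ioo (0:ℝ) 2 :=
    Ioo_mem_nhdsGT (by norm_num)
  refine tendsto_of_tendsto_of_tendsto_of_le_of_le' hlow hup ?_ ?_
  · filter_upwards [hev] with p hp
    obtain ⟨hsum, hr⟩ := lewis_ratio hmn A hA K hK1 hK p hp.1 hp.2 (w p) (hw p hp.1)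
    have hs := Finset.sum_le_sum (fun j (_ : j ∈ Finset.univ) => hr i j)
    rw [hsum, Finset.sum_const, Finset.card_univ, Fintype.card_fin, nsmul_eq_mul] at hs
    rw [div_le_iff₀ (by positivity), div_le_iff₀ hm]
    linarith
  · filter_upwards [hev] with p hp
    obtain ⟨hsum, hr⟩ := lewis_ratio hmn A hA K hK1 hK p hp.1 hp.2 (w p) (hw p hp.1)
    have hs := Finset.sum_le_sum (fun j (_ : j ∈ Finset.univ) => hr j i)
    rw [← Finset.mul_sum, hsum, Finset.sum_const, Finset.card_univ, Fintype.card_fin, nsmul_eq_mul] at hs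
    rw [div_mul_eq_mul_div, le_div_iff₀ hm]
    linarith
end

section
/- Let A ∈ ℝ^{m×n}, c ∈ ℝ^m, w ∈ ℝ^m_{>0}, C_norm > 0, and let a, d ∈ ℝ^m satisfy d_i > 0 and |a_i| ≤ √(d_i) for all i ∈ [m]. For t > 0 define δ_t = inf_{η∈ℝⁿ} ‖(t·c + w·a − Aη)/(w·√d)‖_{w+∞}, where all vector operations (product, quotient, square root) are entrywise and ‖y‖_{w+∞} = ‖y‖_∞ + C_norm·‖y‖_w. Then for every t > 0 and α ≥ 0: δ_{(1+α)t} ≤ (1+α)·δ_t + α·(1 + C_norm·√(Σ_{i=1}^m w_i)). -/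
open Matrix Real BigOperators Pointwise

/-- The weighted norm `‖x‖_w = (∑ i, w i * x i ^ 2) ^ (1/2)`. -/
noncomputable def wNorm {m : ℕ} (w x : Fin m → ℝ) : ℝ :=
  Real.sqrt (∑ i, w i * x i ^ 2)

/-- The mixed norm `‖y‖_{w+∞} = ‖y‖_∞ + C·‖y‖_w` (`‖·‖` on `Fin m → ℝ` is the `ℓ∞` norm). -/
noncomputable def mixNorm {m : ℕ} (C : ℝ) (w y : Fin m → ℝ) : ℝ :=
  ‖y‖ + C * wNorm w y

/-- The centrality measure
`δ_t(w) = inf_η ‖(t·c + w·a - Aη)/(w·√d)‖_{w+∞}` (entrywise operations). -/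
noncomputable def deltaC {m n : ℕ} (A : Matrix (Fin m) (Fin n) ℝ) (C : ℝ)
    (c a d : Fin m → ℝ) (t : ℝ) (w : Fin m → ℝ) : ℝ :=
  sInf (Set.range fun η : Fin n → ℝ =>
    mixNorm C w (fun i => (t * c i + w i * a i - A.mulVec η i) / (w i * Real.sqrt (d i))))

theorem wNorm_eq_aux {m : ℕ} (w x : Fin m → ℝ) (hw : ∀ i, 0 < w i) :
    wNorm w x = ‖(WithLp.toLp 2 (fun i => Real.sqrt (w i) * x i) : EuclideanSpace ℝ (Fin m))‖ := by
  rw [EuclideanSpace.norm_eq, wNorm]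
  congr 1
  refine Finset.sum_congr rfl fun i _ => ?_
  simp [mul_pow, Real.sq_sqrt (hw i).le]

theorem wNorm_comb_aux {m : ℕ} (w y z : Fin m → ℝ) (hw : ∀ i, 0 < w i) (s r : ℝ)
    (hs : 0 ≤ s) (hr : 0 ≤ r) :
    wNorm w (s • y - r • z) ≤ s * wNorm w y + r * wNorm w z := by
  rw [wNorm_eq_aux w _ hw, wNorm_eq_aux w y hw, wNorm_eq_aux w z hw]
  have h : (WithLp.toLp 2 (fun i => Real.sqrt (w i) * (s • y - r • z) i) :
      EuclideanSpace ℝ (Fin m)) =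
      s • WithLp.toLp 2 (fun i => Real.sqrt (w i) * y i) -
      r • WithLp.toLp 2 (fun i => Real.sqrt (w i) * z i) := by
    ext i
    simp
    ring
  rw [h]
  refine (norm_sub_le _ _).trans ?_
  rw [norm_smul, norm_smul, Real.norm_of_nonneg hs, Real.norm_of_nonneg hr]

theorem mixNorm_nonneg_aux {m : ℕ} (C : ℝ) (hC : 0 < C) (w y : Fin m → ℝ) :
    0 ≤ mixNorm C w y :=
  add_nonneg (norm_nonneg _) (mul_nonneg hC.le (Real.sqrt_nonneg _))

/-- effect of increasing the path parameter `t` on centrality. -/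
theorem centrality_t_step {m n : ℕ} (A : Matrix (Fin m) (Fin n) ℝ)
    (c : Fin m → ℝ) (w : Fin m → ℝ) (hw : ∀ i, 0 < w i)
    (Cnorm : ℝ) (hC : 0 < Cnorm) (a d : Fin m → ℝ)
    (hd : ∀ i, 0 < d i) (had : ∀ i, |a i| ≤ Real.sqrt (d i))
    (t α : ℝ) (ht : 0 < t) (hα : 0 ≤ α) :
    deltaC A Cnorm c a d ((1 + α) * t) w ≤
      (1 + α) * deltaC A Cnorm c a d t w +
        α * (1 + Cnorm * Real.sqrt (∑ i, w i)) := by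
  have h1 : 0 < 1 + α := by linarith
  set K := α * (1 + Cnorm * Real.sqrt (∑ i, w i)) with hK
  suffices h : (deltaC A Cnorm c a d ((1 + α) * t) w - K) / (1 + α) ≤
      deltaC A Cnorm c a d t w by
    rw [div_le_iff₀ h1] at h
    linarith
  conv_rhs => rw [deltaC]
  refine le_csInf (Set.range_nonempty _) ?_
  rintro _ ⟨η, rfl⟩
  rw [div_le_iff₀ h1, sub_le_iff_le_add]
  set y : Fin m → ℝ :=
    fun i => (t * c i + w i * a i - A.mulVec η i) / (w i * Real.sqrt (d i)) with hy
  let z : Fin m → ℝ := fun i => a i / Real.sqrt (d i)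
  have hz : ∀ i, |z i| ≤ 1 := fun i => by
    have := Real.sqrt_pos.2 (hd i)
    simp only [z]
    rw [abs_div, abs_of_pos this, div_le_one this]
    exact had i
  have hle : deltaC A Cnorm c a d ((1 + α) * t) w ≤ mixNorm Cnorm w ((1 + α) • y - α • z) := by
    refine csInf_le ⟨0, ?_⟩ ⟨(1 + α) • η, ?_⟩
    · rintro _ ⟨η, rfl⟩
      exact mixNorm_nonneg_aux _ hC _ _
    · show mixNorm _ _ _ = _
      congr 1
      ext i
      have h2 := (Real.sqrt_pos.2 (hd i)).ne'
      have h3 := (hw i).ne'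
      simp only [hy, z, Matrix.mulVec_smul, Pi.smul_apply, Pi.sub_apply, smul_eq_mul]
      field_simp
      ring
  have hn : ‖(1 + α) • y - α • z‖ ≤ (1 + α) * ‖y‖ + α * 1 := by
    refine (norm_sub_le _ _).trans ?_
    rw [norm_smul, norm_smul, Real.norm_of_nonneg h1.le, Real.norm_of_nonneg hα]
    have : ‖z‖ ≤ 1 := (pi_norm_le_iff_of_nonneg zero_le_one).2 hz
    gcongr
  have hwz : wNorm w z ≤ Real.sqrt (∑ i, w i) := by
    refine Real.sqrt_le_sqrt (Finset.sum_le_sum fun i _ => ?_)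
    have : z i ^ 2 ≤ 1 := (sq_le_one_iff_abs_le_one _).2 (hz i)
    nlinarith [hw i]
  have hc := wNorm_comb_aux w y z hw (1 + α) α h1.le hα
  have hc2 : wNorm w ((1 + α) • y - α • z) ≤
      (1 + α) * wNorm w y + α * Real.sqrt (∑ i, w i) :=
    hc.trans (by gcongr)
  have hc3 := mul_le_mul_of_nonneg_left hc2 hC.le
  refine hle.trans ?_
  unfold mixNorm
  rw [hK]
  linarith
end
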